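/- For any set E and any irreflexive symmetric relation I ⊆ E × E, the free partially commutative monoid M(E,I) is cancellative: for all x, y, z ∈ M(E,I), xz = yz implies x = y, and zx = zy implies x = y. -/

import Mathlib

open CategoryTheory

/-- The elementary commutation relation. -/
def traceRel (E : Type u) (I : E → E → Prop) : FreeMonoid E → FreeMonoid E → Prop :=
  fun x y => ∃ a b, I a b ∧ x = FreeMonoid.of a * FreeMonoid.of b ∧
    y = FreeMonoid.of b * FreeMonoid.of a

/-- The congruence generated by the commutation relations. -/
def traceCon (E : Type u) (I : E → E → Prop) : Con (FreeMonoid E) := conGen (traceRel E I)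

/-- The free partially commutative (trace) monoid `M(E,I)`. -/
def TraceMonoid (E : Type u) (I : E → E → Prop) : Type u := (traceCon E I).Quotient

instance (E : Type u) (I : E → E → Prop) : Monoid (TraceMonoid E I) :=
  Con.monoid (traceCon E I)

/-- The canonical generator map `E → M(E,I)`. -/
def TraceMonoid.of (E : Type u) (I : E → E → Prop) (a : E) : TraceMonoid E I :=
  (traceCon E I).mk' (FreeMonoid.of a)

/-- The clique number of the independence graph `(E, I)`:  the supremum of the
cardinalities of finite sets of pairwise `I`-related (distinct) elements. -/
noncomputable def cliqueNumber (E : Type u) (I : E → E → Prop) : ℕ∞ :=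
  ⨆ (s : {s : Finset E // ∀ a ∈ s, ∀ b ∈ s, a ≠ b → I a b}), (s.1.card : ℕ∞)

/-!
Congruent words contain the same letters, so erasing the first occurrence of a letter `a` from two
congruent products takes place in corresponding factors, and by induction yields congruent words.
Erasing `a` from `a * x` returns `x`; hence letters, and then words, cancel on the left. Reversal of
words preserves the congruence and exchanges left with right.
-/

section TraceCon

variable {E : Type u} {I : E → E → Prop} {w x y z : FreeMonoid E}

theorem traceCon_of_mul_of {a b : E} (hab : I a b) :
    traceCon E I (.of a * .of b) (.of b * .of a) :=
  ConGen.Rel.of _ _ ⟨a, b, hab, rfl, rfl⟩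

@[elab_as_elim]
theorem traceCon_induction {motive : ∀ x y, traceCon E I x y → Prop}
    (swap : ∀ a b (hab : I a b), motive _ _ (traceCon_of_mul_of hab))
    (refl : ∀ x, motive x x ((traceCon E I).refl x))
    (symm : ∀ x y (h : traceCon E I x y), motive x y h → motive y x ((traceCon E I).symm h))
    (trans : ∀ x y z (hxy : traceCon E I x y) (hyz : traceCon E I y z),
      motive x y hxy → motive y z hyz → motive x z ((traceCon E I).trans hxy hyz))
    (mul : ∀ w x y z (hwx : traceCon E I w x) (hyz : traceCon E I y z),
      motive w x hwx → motive y z hyz → motive (w * y) (x * z) ((traceCon E I).mul hwx hyz))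
    (h : traceCon E I x y) : motive x y h := by
  change ConGen.Rel (traceRel E I) x y at h
  induction h with
  | of _ _ hrel =>
    obtain ⟨a, b, hab, rfl, rfl⟩ := hrel
    exact swap a b hab
  | refl x => exact refl x
  | symm h ih => exact symm _ _ h ih
  | trans hxy hyz ih₁ ih₂ => exact trans _ _ _ hxy hyz ih₁ ih₂
  | mul hwx hyz ih₁ ih₂ => exact mul _ _ _ _ hwx hyz ih₁ ih₂

theorem mem_iff_of_traceCon (h : traceCon E I x y) (a : E) : a ∈ x ↔ a ∈ y := by
  induction h using traceCon_induction with
  | swap b c _ => simp only [FreeMonoid.mem_mul, or_comm]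
  | refl x => rfl
  | symm x y _ ih => exact ih.symm
  | trans x y z _ _ ih₁ ih₂ => exact ih₁.trans ih₂
  | mul w x y z _ _ ih₁ ih₂ => simp only [FreeMonoid.mem_mul, ih₁, ih₂]

theorem traceCon_reverse (h : traceCon E I x y) : traceCon E I x.reverse y.reverse := by
  induction h using traceCon_induction with
  | swap a b hab =>
    simpa only [FreeMonoid.reverse_mul, FreeMonoid.reverse_of] using
      (traceCon E I).symm (traceCon_of_mul_of hab)
  | refl x => exact (traceCon E I).refl _
  | symm x y _ ih => exact (traceCon E I).symm ih
  | trans x y z _ _ ih₁ ih₂ => exact (traceCon E I).trans ih₁ ih₂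
  | mul w x y z _ _ ih₁ ih₂ =>
    simpa only [FreeMonoid.reverse_mul] using (traceCon E I).mul ih₂ ih₁

section EraseLetter

variable [DecidableEq E]

/-- The word `x` with its first occurrence of the letter `a` removed, and `x` itself if `a` does not
occur in it. This is `List.erase` on words; it provides a left inverse to multiplication by `a` on
the left. -/
def eraseLetter (a : E) (x : FreeMonoid E) : FreeMonoid E :=
  FreeMonoid.ofList (x.toList.erase a)

theorem eraseLetter_of_notMem {a : E} (h : a ∉ x) : eraseLetter a x = x :=
  List.erase_of_not_mem h

theorem eraseLetter_of_mul (a : E) (x : FreeMonoid E) : eraseLetter a (.of a * x) = x :=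
  List.erase_cons_head a x.toList

theorem eraseLetter_mul_of_mem {a : E} (h : a ∈ x) (y : FreeMonoid E) :
    eraseLetter a (x * y) = eraseLetter a x * y :=
  List.erase_append_left y.toList h

theorem eraseLetter_mul_of_notMem {a : E} (h : a ∉ x) (y : FreeMonoid E) :
    eraseLetter a (x * y) = x * eraseLetter a y :=
  List.erase_append_right y.toList h

theorem eraseLetter_of_mul_of_comm (a b : E) :
    eraseLetter a (.of a * .of b) = eraseLetter a (.of b * .of a) := by
  rcases eq_or_ne a b with rfl | hab
  · rfl
  · have ha : a ∉ FreeMonoid.of b := mt FreeMonoid.mem_of.mp hab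
    have erase_self : eraseLetter a (.of a) = 1 := eraseLetter_of_mul a 1
    rw [eraseLetter_of_mul, eraseLetter_mul_of_notMem ha, erase_self, mul_one]

theorem traceCon_eraseLetter_swap {b c : E} (hbc : I b c) (a : E) :
    traceCon E I (eraseLetter a (.of b * .of c)) (eraseLetter a (.of c * .of b)) := by
  by_cases hab : a = b
  · subst hab
    rw [eraseLetter_of_mul_of_comm]
    exact (traceCon E I).refl _
  by_cases hac : a = c
  · subst hac
    rw [eraseLetter_of_mul_of_comm]
    exact (traceCon E I).refl _
  have notMem_bc : a ∉ FreeMonoid.of b * FreeMonoid.of c := by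
    simp only [FreeMonoid.mem_mul, FreeMonoid.mem_of, hab, hac, or_self, not_false_eq_true]
  have notMem_cb : a ∉ FreeMonoid.of c * FreeMonoid.of b := by
    simp only [FreeMonoid.mem_mul, FreeMonoid.mem_of, hab, hac, or_self, not_false_eq_true]
  rw [eraseLetter_of_notMem notMem_bc, eraseLetter_of_notMem notMem_cb]
  exact traceCon_of_mul_of hbc

theorem traceCon_eraseLetter_mul {a : E} (hwx : traceCon E I w x) (hyz : traceCon E I y z)
    (hwx_erase : traceCon E I (eraseLetter a w) (eraseLetter a x))
    (hyz_erase : traceCon E I (eraseLetter a y) (eraseLetter a z)) :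
    traceCon E I (eraseLetter a (w * y)) (eraseLetter a (x * z)) := by
  by_cases hw : a ∈ w
  · have hx : a ∈ x := (mem_iff_of_traceCon hwx a).mp hw
    rw [eraseLetter_mul_of_mem hw, eraseLetter_mul_of_mem hx]
    exact (traceCon E I).mul hwx_erase hyz
  · have hx : a ∉ x := mt (mem_iff_of_traceCon hwx a).mpr hw
    rw [eraseLetter_mul_of_notMem hw, eraseLetter_mul_of_notMem hx]
    exact (traceCon E I).mul hwx hyz_erase

theorem traceCon_eraseLetter (h : traceCon E I x y) (a : E) :
    traceCon E I (eraseLetter a x) (eraseLetter a y) := by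
  induction h using traceCon_induction with
  | swap b c hbc => exact traceCon_eraseLetter_swap hbc a
  | refl x => exact (traceCon E I).refl _
  | symm x y _ ih => exact (traceCon E I).symm ih
  | trans x y z _ _ ih₁ ih₂ => exact (traceCon E I).trans ih₁ ih₂
  | mul w x y z hwx hyz ih₁ ih₂ => exact traceCon_eraseLetter_mul hwx hyz ih₁ ih₂

end EraseLetter

theorem traceCon_of_mul_left_cancel {a : E} (h : traceCon E I (.of a * x) (.of a * y)) :
    traceCon E I x y := by
  classical
  simpa only [eraseLetter_of_mul] using traceCon_eraseLetter h a

theorem traceCon_mul_left_cancel (h : traceCon E I (z * x) (z * y)) : traceCon E I x y := by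
  induction z using FreeMonoid.inductionOn' with
  | one => simpa only [one_mul] using h
  | of_mul a z ih =>
    rw [mul_assoc, mul_assoc] at h
    exact ih (traceCon_of_mul_left_cancel h)

theorem traceCon_mul_right_cancel (h : traceCon E I (x * z) (y * z)) : traceCon E I x y := by
  have h_reverse : traceCon E I (z.reverse * x.reverse) (z.reverse * y.reverse) := by
    simpa only [FreeMonoid.reverse_mul] using traceCon_reverse h
  simpa only [FreeMonoid.reverse_reverse] using
    traceCon_reverse (traceCon_mul_left_cancel h_reverse)

end TraceCon

theorem trace_cancellative_general (E : Type u) (I : E → E → Prop) :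
    IsCancelMul (TraceMonoid E I) where
  mul_left_cancel z x y h := by
    induction x, y using Con.induction_on₂ with | _ x y
    induction z using Con.induction_on with | _ z
    exact (Con.eq _).mpr (traceCon_mul_left_cancel ((Con.eq _).mp h))
  mul_right_cancel z x y h := by
    induction x, y using Con.induction_on₂ with | _ x y
    induction z using Con.induction_on with | _ z
    exact (Con.eq _).mpr (traceCon_mul_right_cancel ((Con.eq _).mp h))

theorem trace_cancellative (E : Type u) (I : E → E → Prop)
    (_hirr : ∀ a, ¬ I a a) (_hsym : ∀ a b, I a b → I b a) :
    (∀ x y z : TraceMonoid E I, x * z = y * z → x = y) ∧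
    (∀ x y z : TraceMonoid E I, z * x = z * y → x = y) := by
  have := trace_cancellative_general E I
  exact ⟨fun _ _ _ => mul_right_cancel, fun _ _ _ => mul_left_cancel⟩
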